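/- arXiv:1810.02839 — 3 statements merged into one kernel-verified Lean document; each statement's English description precedes it below -/
import Mathlib

section
/- Let S be a set of n ≥ 3 points in the plane in convex position, and let P₁ and P₂ be two spanning paths on S each consisting entirely of edges of the convex hull of S (i.e., each is obtained from the hull cycle by deleting one hull edge). Then P₁ can be transformed into P₂ by a sequence of at most n − 2 edge slides. -/
open scoped Classical

noncomputable section

/-- Points in the plane. -/
abbrev Pt : Type := ℝ × ℝ

/-- The closed straight-line segment spanned by an (unordered) edge. -/
def segOf (e : Sym2 Pt) : Set Pt :=
  Sym2.lift ⟨fun p q => segment ℝ p q, fun p q => segment_symm ℝ p q⟩ e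

/-- The set of endpoints of an edge. -/
def epts (e : Sym2 Pt) : Set Pt := {p | p ∈ e}

/-- Two edges intersect in at most common endpoints (they do not cross). -/
def NoCrossPair (e f : Sym2 Pt) : Prop := segOf e ∩ segOf f ⊆ epts e ∩ epts f

/-- A set of edges is noncrossing: any two distinct edges meet in at most a common endpoint. -/
def NoCross (E : Finset (Sym2 Pt)) : Prop := ∀ e ∈ E, ∀ f ∈ E, e ≠ f → NoCrossPair e f

/-- `E` is the edge set of a noncrossing straight-line spanning tree on the point set `S`:
all edges are nondegenerate with endpoints in `S`, pairwise noncrossing, there are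
`|S| - 1` of them, and they connect all of `S`. -/
def IsPST (S : Finset Pt) (E : Finset (Sym2 Pt)) : Prop :=
  (∀ e ∈ E, ¬ e.IsDiag ∧ ∀ p ∈ e, p ∈ S) ∧
  NoCross E ∧ E.card + 1 = S.card ∧
  ∀ p ∈ S, ∀ q ∈ S, Relation.ReflTransGen (fun a b => s(a, b) ∈ E) p q

/-- `S` is in general position: no three of its points are collinear. -/
def GenPos (S : Finset Pt) : Prop :=
  ∀ p ∈ S, ∀ q ∈ S, ∀ r ∈ S, p ≠ q → p ≠ r → q ≠ r → ¬ Collinear ℝ ({p, q, r} : Set Pt)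

/-- `S` is in convex position: every point of `S` is a vertex of the convex hull of `S`. -/
def ConvexPos (S : Finset Pt) : Prop :=
  ∀ p ∈ S, p ∉ convexHull ℝ ((S : Set Pt) \ {p})

/-- The open interior of the triangle with vertices `p`, `q`, `r`. -/
def triInt (p q r : Pt) : Set Pt := interior (convexHull ℝ ({p, q, r} : Set Pt))

/-- `y` can be reached from `x` by a sequence of at most `m` `step`-operations. -/
def ReachesIn {α : Type*} (step : α → α → Prop) (m : ℕ) (x y : α) : Prop :=
  ∃ k ≤ m, ∃ f : ℕ → α, f 0 = x ∧ f k = y ∧ ∀ i < k, step (f i) (f (i + 1))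

/-- A simultaneous rotation from `E₁` to `E₂`: a bijection `π` between the removed and the
inserted edges such that each `e` shares an endpoint with `π e` and `π e` crosses no edge
of `E₁`. -/
def SimRotation (S : Finset Pt) (E₁ E₂ : Finset (Sym2 Pt)) : Prop :=
  IsPST S E₁ ∧ IsPST S E₂ ∧ ∃ π : Sym2 Pt → Sym2 Pt,
    Set.BijOn π ↑(E₁ \ E₂) ↑(E₂ \ E₁) ∧
    ∀ e ∈ E₁ \ E₂, (∃ p, p ∈ e ∧ p ∈ π e) ∧ ∀ f ∈ E₁, NoCrossPair (π e) f

/-- An empty-triangle rotation replaces an edge `pq` by an adjacent edge `pr` such that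
no edge of either tree meets the interior of the triangle `pqr`. -/
def EmptyTriRot (S : Finset Pt) (E₁ E₂ : Finset (Sym2 Pt)) : Prop :=
  IsPST S E₁ ∧ IsPST S E₂ ∧ ∃ p q r : Pt,
    E₁ \ E₂ = {s(p, q)} ∧ E₂ \ E₁ = {s(p, r)} ∧
    ∀ g ∈ E₁ ∪ E₂, Disjoint (segOf g) (triInt p q r)

/-- A simultaneous empty-triangle rotation. -/
def SimEmptyTriRot (S : Finset Pt) (E₁ E₂ : Finset (Sym2 Pt)) : Prop :=
  IsPST S E₁ ∧ IsPST S E₂ ∧ ∃ π : Sym2 Pt → Sym2 Pt,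
    Set.BijOn π ↑(E₁ \ E₂) ↑(E₂ \ E₁) ∧
    ∀ e ∈ E₁ \ E₂, ∃ p q r : Pt, e = s(p, q) ∧ π e = s(p, r) ∧
      ∀ g ∈ E₁ ∪ E₂, Disjoint (segOf g) (triInt p q r)

/-- An edge slide replaces `pq` by `pr`, where `qr` is an edge of both trees and no edge of
either tree meets the interior of the triangle `pqr`. -/
def EdgeSlide (S : Finset Pt) (E₁ E₂ : Finset (Sym2 Pt)) : Prop :=
  IsPST S E₁ ∧ IsPST S E₂ ∧ ∃ p q r : Pt,
    E₁ \ E₂ = {s(p, q)} ∧ E₂ \ E₁ = {s(p, r)} ∧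
    s(q, r) ∈ E₁ ∧ s(q, r) ∈ E₂ ∧
    ∀ g ∈ E₁ ∪ E₂, Disjoint (segOf g) (triInt p q r)

/-- A simultaneous edge slide. -/
def SimEdgeSlide (S : Finset Pt) (E₁ E₂ : Finset (Sym2 Pt)) : Prop :=
  IsPST S E₁ ∧ IsPST S E₂ ∧ ∃ π : Sym2 Pt → Sym2 Pt,
    Set.BijOn π ↑(E₁ \ E₂) ↑(E₂ \ E₁) ∧
    ∀ e ∈ E₁ \ E₂, ∃ p q r : Pt, e = s(p, q) ∧ π e = s(p, r) ∧
      s(q, r) ∈ E₁ ∧ s(q, r) ∈ E₂ ∧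
      ∀ g ∈ E₁ ∪ E₂, Disjoint (segOf g) (triInt p q r)

/-- `e` is an edge of the convex hull of `S`: it joins two distinct points of `S` and its
segment lies on the boundary of the convex hull of `S`. -/
def IsHullEdge (S : Finset Pt) (e : Sym2 Pt) : Prop :=
  ∃ u v : Pt, e = s(u, v) ∧ u ∈ S ∧ v ∈ S ∧ u ≠ v ∧
    segment ℝ u v ⊆ frontier (convexHull ℝ (S : Set Pt))

/-- The spanning star centered at `v`. -/
def starAt (S : Finset Pt) (v : Pt) : Finset (Sym2 Pt) := (S.erase v).image (fun w => s(v, w))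

/-- An edge-labeled tree: an edge set together with a labeling function. -/
abbrev LTree := Finset (Sym2 Pt) × (Sym2 Pt → ℕ)

/-- `T` is an edge-labeled noncrossing straight-line spanning tree on `S`: its edge set is in
`𝒯(S)` and its labeling is a bijection from the edges onto `{1, …, |S| - 1}`
(normalized to `0` on non-edges). -/
def IsLabeledPST (S : Finset Pt) (T : LTree) : Prop :=
  IsPST S T.1 ∧ Set.BijOn T.2 ↑T.1 (Set.Icc 1 (S.card - 1)) ∧ ∀ e, e ∉ T.1 → T.2 e = 0

/-- A simultaneous exchange on edge-labeled trees: an arbitrary bijection between removed and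
inserted edges transferring labels, all common edges keeping their labels. -/
def LabSimExchange (S : Finset Pt) (T₁ T₂ : LTree) : Prop :=
  IsLabeledPST S T₁ ∧ IsLabeledPST S T₂ ∧ ∃ π : Sym2 Pt → Sym2 Pt,
    Set.BijOn π ↑(T₁.1 \ T₂.1) ↑(T₂.1 \ T₁.1) ∧
    (∀ e ∈ T₁.1 \ T₂.1, T₂.2 (π e) = T₁.2 e) ∧
    ∀ e ∈ T₁.1 ∩ T₂.1, T₂.2 e = T₁.2 e

/-- A rotation on edge-labeled trees: the removed and inserted edges share an endpoint and do
not cross, the label of the removed edge is transferred, and all other labels are kept. -/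
def LabRotation (S : Finset Pt) (T₁ T₂ : LTree) : Prop :=
  IsLabeledPST S T₁ ∧ IsLabeledPST S T₂ ∧ ∃ e₁ e₂ : Sym2 Pt,
    T₁.1 \ T₂.1 = {e₁} ∧ T₂.1 \ T₁.1 = {e₂} ∧
    (∃ p, p ∈ e₁ ∧ p ∈ e₂) ∧ NoCrossPair e₁ e₂ ∧
    T₂.2 e₂ = T₁.2 e₁ ∧ ∀ e ∈ T₁.1 ∩ T₂.1, T₂.2 e = T₁.2 e

/-- An edge slide on edge-labeled trees, transferring the label of the slid edge. -/
def LabEdgeSlide (S : Finset Pt) (T₁ T₂ : LTree) : Prop :=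
  IsLabeledPST S T₁ ∧ IsLabeledPST S T₂ ∧ ∃ p q r : Pt,
    T₁.1 \ T₂.1 = {s(p, q)} ∧ T₂.1 \ T₁.1 = {s(p, r)} ∧
    s(q, r) ∈ T₁.1 ∧ s(q, r) ∈ T₂.1 ∧
    (∀ g ∈ T₁.1 ∪ T₂.1, Disjoint (segOf g) (triInt p q r)) ∧
    T₂.2 (s(p, r)) = T₁.2 (s(p, q)) ∧ ∀ e ∈ T₁.1 ∩ T₂.1, T₂.2 e = T₁.2 e

/-- cross product -/
def crs (p a b : Pt) : ℝ := (a.1-p.1)*(b.2-p.2)-(a.2-p.2)*(b.1-p.1)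

lemma collinear_of_crs (u v x : Pt) (huv : u ≠ v) (h : crs u v x = 0) :
    Collinear ℝ ({u, v, x} : Set Pt) := by
  rw [collinear_iff_of_mem (p₀ := u) (by simp)]
  refine ⟨v - u, ?_⟩
  have key : ∃ t : ℝ, x = t • (v - u) +ᵥ u := by
    unfold crs at h
    by_cases h1 : v.1 - u.1 = 0
    · have h2 : v.2 - u.2 ≠ 0 := by
        intro h2
        apply huv
        ext <;> linarith
      refine ⟨(x.2 - u.2) / (v.2 - u.2), ?_⟩
      ext
      · simp [h1] at h ⊢
        rcases h with h | h
        · exact absurd h h2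
        · linarith
      · simp
        field_simp
        ring
    · refine ⟨(x.1 - u.1) / (v.1 - u.1), ?_⟩
      ext
      · simp
        field_simp
        ring
      · simp
        field_simp
        linarith
  rintro p hp
  simp only [Set.mem_insert_iff, Set.mem_singleton_iff] at hp
  rcases hp with rfl | rfl | rfl
  · exact ⟨0, by simp⟩
  · exact ⟨1, by simp⟩
  · exact key

lemma crs_ne {S : Finset Pt} (hS : ConvexPos S) {u v x : Pt} (hu : u ∈ S) (hv : v ∈ S)
    (hx : x ∈ S) (huv : u ≠ v) (hux : u ≠ x) (hvx : v ≠ x) : crs u v x ≠ 0 := by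
  intro h
  have hw : ∀ a ∈ S, ∀ b ∈ S, ∀ c ∈ S, a ≠ b → c ≠ b → ¬ Wbtw ℝ a b c := by
    intro a ha b hb c hc hab hcb hw
    apply hS b hb
    have := hw.mem_segment
    exact segment_subset_convexHull (by simp [ha, hab]) (by simp [hc, hcb]) this
  rcases (collinear_of_crs u v x huv h).wbtw_or_wbtw_or_wbtw with h | h | h
  · exact hw _ hu _ hv _ hx huv hvx.symm h
  · exact hw _ hv _ hx _ hu hvx hux h
  · exact hw _ hx _ hu _ hv hux.symm huv.symm h

lemma mem_tri {u v x z : Pt} {C : Set Pt} (hC : Convex ℝ C) (hu : u ∈ C) (hv : v ∈ C) (hx : x ∈ C)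
    (h0 : crs u v x ≠ 0)
    (h1 : 0 ≤ crs u v z / crs u v x) (h2 : 0 ≤ crs v x z / crs u v x)
    (h3 : 0 ≤ crs x u z / crs u v x) : z ∈ C := by
  have hsum : crs v x z / crs u v x + crs x u z / crs u v x + crs u v z / crs u v x = 1 := by
    field_simp
    unfold crs
    ring
  have hz : z = (crs v x z / crs u v x) • u + (crs x u z / crs u v x) • v +
      (crs u v z / crs u v x) • x := by
    ext
    · simp
      field_simp
      unfold crs
      ring
    · simp
      field_simp
      unfold crs
      ring
  rw [hz]
  have := hC.sum_mem (t := Finset.univ)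
    (w := ![crs v x z / crs u v x, crs x u z / crs u v x, crs u v z / crs u v x])
    (z := ![u, v, x]) (by intro i _; fin_cases i <;> simp [h1, h2, h3])
    (by simpa [Fin.sum_univ_three] using hsum) (by intro i _; fin_cases i <;> simp [hu, hv, hx])
  simpa [Fin.sum_univ_three] using this

lemma crs_cont (a b : Pt) : Continuous (fun z => crs a b z) := by
  unfold crs
  fun_prop

lemma hull_side {S : Finset Pt} (hS : ConvexPos S) {u v x y : Pt} (hu : u ∈ S) (hv : v ∈ S)
    (hx : x ∈ S) (hy : y ∈ S) (huv : u ≠ v) (hux : u ≠ x) (hvx : v ≠ x) (huy : u ≠ y) (hvy : v ≠ y)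
    (hf : segment ℝ u v ⊆ frontier (convexHull ℝ (S : Set Pt))) :
    0 < crs u v x * crs u v y := by
  have hx0 := crs_ne hS hu hv hx huv hux hvx
  have hy0 := crs_ne hS hu hv hy huv huy hvy
  by_contra hneg
  have hlt : crs u v x * crs u v y < 0 := lt_of_le_of_ne (not_lt.mp hneg) (mul_ne_zero hx0 hy0)
  have hm := hf (midpoint_mem_segment (𝕜 := ℝ) u v)
  apply hm.2
  rw [mem_interior]
  refine ⟨{z | 0 < crs v x z / crs u v x} ∩ {z | 0 < crs x u z / crs u v x} ∩
    ({z | 0 < crs v y z / crs u v y} ∩ {z | 0 < crs y u z / crs u v y}), ?_, ?_, ?_⟩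
  · rintro z ⟨⟨h1, h2⟩, h3, h4⟩
    simp only [Set.mem_ofPred_eq] at h1 h2 h3 h4
    have hC := convex_convexHull ℝ (S : Set Pt)
    have sub := subset_convexHull ℝ (S : Set Pt)
    by_cases h : 0 ≤ crs u v z / crs u v x
    · exact mem_tri hC (sub hu) (sub hv) (sub hx) hx0 h h1.le h2.le
    · refine mem_tri hC (sub hu) (sub hv) (sub hy) hy0 ?_ h3.le h4.le
      push Not at h
      have e : crs u v z / crs u v y = (crs u v z / crs u v x) * (crs u v x * crs u v y) / (crs u v y)^2 := by
        field_simp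
      rw [e]
      have := mul_pos_of_neg_of_neg h hlt
      positivity
  · have c := fun a b (r : ℝ) => isOpen_lt (continuous_const (y := (0:ℝ))) ((crs_cont a b).div_const r)
    exact ((c _ _ _).inter (c _ _ _)).inter ((c _ _ _).inter (c _ _ _))
  · have e1 : ∀ x, crs v x (midpoint ℝ u v) = crs u v x / 2 := by
      intro x
      simp [crs, midpoint_eq_smul_add]
      ring
    have e2 : ∀ x, crs x u (midpoint ℝ u v) = crs u v x / 2 := by
      intro x
      simp [crs, midpoint_eq_smul_add]
      ring
    simp only [Set.mem_inter_iff, Set.mem_ofPred_eq, e1, e2]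
    have e3 : crs u v x / 2 / crs u v x = 1/2 := by field_simp
    have e4 : crs u v y / 2 / crs u v y = 1/2 := by field_simp
    rw [e3, e4]
    norm_num

lemma crs_swap (p a b : Pt) : crs p a b = - crs p b a := by unfold crs; ring

lemma hull_side' {S : Finset Pt} (hS : ConvexPos S) {u v x y : Pt}
    (hx : x ∈ S) (hy : y ∈ S) (hux : u ≠ x) (hvx : v ≠ x) (huy : u ≠ y) (hvy : v ≠ y)
    (h : IsHullEdge S s(u, v)) : 0 < crs u v x * crs u v y := by
  obtain ⟨a, b, e, ha, hb, hab, hf⟩ := h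
  rw [Sym2.eq_iff] at e
  rcases e with ⟨rfl, rfl⟩ | ⟨rfl, rfl⟩
  · exact hull_side hS ha hb hx hy hab hux hvx huy hvy hf
  · rw [segment_symm] at hf
    exact hull_side hS hb ha hx hy hab.symm hux hvx huy hvy hf

lemma hull_deg {S : Finset Pt} (hS : ConvexPos S) {p a b c : Pt}
    (ha : IsHullEdge S s(p, a)) (hb : IsHullEdge S s(p, b)) (hc : IsHullEdge S s(p, c))
    (hab : a ≠ b) (hac : a ≠ c) (hbc : b ≠ c) : False := by
  have mem : ∀ a, IsHullEdge S s(p, a) → a ∈ S ∧ p ≠ a := by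
    rintro a ⟨u, v, e, hu, hv, huv, -⟩
    rw [Sym2.eq_iff] at e
    rcases e with ⟨rfl, rfl⟩ | ⟨rfl, rfl⟩
    · exact ⟨hv, huv⟩
    · exact ⟨hu, huv.symm⟩
  obtain ⟨ma, na⟩ := mem a ha
  obtain ⟨mb, nb⟩ := mem b hb
  obtain ⟨mc, nc⟩ := mem c hc
  have h1 := hull_side' hS mb mc nb hab nc hac ha
  have h2 := hull_side' hS ma mc na hab.symm nc hbc hb
  have h3 := hull_side' hS ma mb na hac.symm nb hbc.symm hc
  rw [crs_swap p b a] at h2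
  rw [crs_swap p c a, crs_swap p c b] at h3
  have := mul_pos (mul_pos h1 h2) h3
  nlinarith [sq_nonneg (crs p a b * crs p a c * crs p b c)]

lemma segOf_mk (a b : Pt) : segOf s(a, b) = segment ℝ a b := rfl

lemma hull_nocross {S : Finset Pt} (hS : ConvexPos S) {e f : Sym2 Pt} (he : IsHullEdge S e)
    (hf : ∀ p ∈ f, p ∈ S) (hd : ¬ f.IsDiag) (hef : e ≠ f) : NoCrossPair e f := by
  obtain ⟨u, v, rfl, hu, hv, huv, hfr⟩ := he
  induction f using Sym2.ind with
  | _ a b =>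
  have ha : a ∈ S := hf a (by simp)
  have hb : b ∈ S := hf b (by simp)
  have hab : a ≠ b := by simpa using hd
  rintro z ⟨hz1, hz2⟩
  rw [segOf_mk] at hz1 hz2
  have z0 : crs u v z = 0 := by
    obtain ⟨s, t, hs, ht, hst, rfl⟩ := hz1
    have : s = 1 - t := by linarith
    subst this
    simp [crs]
    ring
  obtain ⟨s, t, hs, ht, hst, rfl⟩ := hz2
  have key : s * crs u v a + t * crs u v b = 0 := by
    rw [← z0]
    have : s = 1 - t := by linarith
    subst this
    simp [crs]
    ring
  have cu : crs u v u = 0 := by simp [crs]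
  have cv : crs u v v = 0 := by simp [crs]; ring
  have hA : a = u ∨ a = v ∨ (u ≠ a ∧ v ≠ a) := by
    by_cases h : a = u <;> by_cases h' : a = v <;> simp_all [eq_comm]
  have hB : b = u ∨ b = v ∨ (u ≠ b ∧ v ≠ b) := by
    by_cases h : b = u <;> by_cases h' : b = v <;> simp_all [eq_comm]
  have onA : (a = u ∨ a = v) → (u ≠ b ∧ v ≠ b) → s • a + t • b ∈ epts s(u,v) ∩ epts s(a,b) := by
    intro h1 h2
    have h0 := crs_ne hS hu hv hb huv h2.1 h2.2
    have : crs u v a = 0 := by rcases h1 with rfl | rfl <;> assumption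
    rw [this] at key
    have ht0 : t = 0 := by simpa [h0] using key
    have hs1 : s = 1 := by linarith
    subst ht0 hs1
    simpa [epts] using h1
  have onB : (b = u ∨ b = v) → (u ≠ a ∧ v ≠ a) → s • a + t • b ∈ epts s(u,v) ∩ epts s(a,b) := by
    intro h1 h2
    have h0 := crs_ne hS hu hv ha huv h2.1 h2.2
    have : crs u v b = 0 := by rcases h1 with rfl | rfl <;> assumption
    rw [this] at key
    have ht0 : s = 0 := by simpa [h0] using key
    have hs1 : t = 1 := by linarith
    subst ht0 hs1
    simpa [epts] using h1
  rcases hA with h1 | h1 | h1 <;> rcases hB with h2 | h2 | h2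
  · exact absurd (h1.trans h2.symm) hab
  · subst h1 h2; exact absurd rfl hef
  · exact onA (Or.inl h1) h2
  · subst h1 h2; exact absurd Sym2.eq_swap hef
  · exact absurd (h1.trans h2.symm) hab
  · exact onA (Or.inr h1) h2
  · exact onB (Or.inl h2) h1
  · exact onB (Or.inr h2) h1
  · exfalso
    have hp := hull_side hS hu hv ha hb huv h1.1 h1.2 h2.1 h2.2 hfr
    have hsum : 0 < s * (crs u v a)^2 + t * (crs u v a * crs u v b) := by
      have : 0 < (crs u v a)^2 := by
        have := left_ne_zero_of_mul hp.ne'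
        positivity
      rcases hs.eq_or_lt with h | h
      · have : t = 1 := by linarith
        subst h this
        simpa using hp
      · have := mul_pos h this
        have := mul_nonneg ht hp.le
        linarith
    have : s * (crs u v a)^2 + t * (crs u v a * crs u v b) = 0 := by
      linear_combination crs u v a * key
    linarith

lemma tri_side {p q r : Pt} (h : crs p q r ≠ 0) : Disjoint (segment ℝ p q) (triInt p q r) := by
  rw [Set.disjoint_left]
  intro z hz hi
  have hsub : convexHull ℝ ({p, q, r} : Set Pt) ⊆ {z | 0 ≤ crs p q r * crs p q z} := by
    apply convexHull_min
    · rintro w hw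
      simp only [Set.mem_insert_iff, Set.mem_singleton_iff] at hw
      rcases hw with rfl | rfl | rfl
      · simp [crs]
      · have : crs p w w = 0 := by unfold crs; ring
        simp [this]
      · exact mul_self_nonneg (crs p q w)
    · intro x hx y hy s t hs ht hst
      simp only [Set.mem_ofPred_eq] at hx hy ⊢
      have : crs p q (s • x + t • y) = s * crs p q x + t * crs p q y := by
        have : s = 1 - t := by linarith
        subst this
        simp [crs]
        ring
      rw [this]
      nlinarith [mul_nonneg hs hx, mul_nonneg ht hy]
  have z0 : crs p q z = 0 := by
    obtain ⟨s, t, hs, ht, hst, rfl⟩ := hz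
    have : s = 1 - t := by linarith
    subst this
    simp [crs]
    ring
  have hc : Continuous (fun t : ℝ => z - t • (r - p)) := by fun_prop
  have ho : IsOpen ((fun t : ℝ => z - t • (r - p)) ⁻¹' triInt p q r) :=
    isOpen_interior.preimage hc
  have hn := ho.mem_nhds (x := 0) (by simpa using hi)
  obtain ⟨ε, hε, hb⟩ := Metric.mem_nhds_iff.mp hn
  have hm : ε / 2 ∈ Metric.ball (0:ℝ) ε := by
    rw [Metric.mem_ball, Real.dist_eq, sub_zero, abs_of_pos] <;> linarith
  have h2 := hsub (interior_subset (hb hm))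
  simp only [Set.mem_ofPred_eq] at h2
  have e : crs p q (z - (ε/2) • (r - p)) = - (ε/2) * crs p q r := by
    have : crs p q (z - (ε/2) • (r - p)) = crs p q z - (ε/2) * crs p q r := by
      simp [crs]
      ring
    rw [this, z0]; ring
  rw [e] at h2
  have : 0 < (crs p q r)^2 := by positivity
  nlinarith [mul_pos hε this]

lemma tri_hull {S : Finset Pt} {p q r : Pt} (hp : p ∈ S) (hq : q ∈ S) (hr : r ∈ S) {e : Sym2 Pt}
    (he : IsHullEdge S e) : Disjoint (segOf e) (triInt p q r) := by
  obtain ⟨u, v, rfl, hu, hv, huv, hfr⟩ := he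
  rw [Set.disjoint_left]
  intro z hz hi
  refine (hfr hz).2 (interior_mono (convexHull_mono ?_) hi)
  intro w hw
  simp only [Set.mem_insert_iff, Set.mem_singleton_iff] at hw
  rcases hw with rfl | rfl | rfl <;> assumption

lemma path_exists {S : Finset Pt} (hS : ConvexPos S) (hn : 3 ≤ S.card) {E : Finset (Sym2 Pt)}
    (hE : IsPST S E) (hh : ∀ e ∈ E, IsHullEdge S e) :
    ∃ v : ℕ → Pt, (∀ i < S.card, v i ∈ S) ∧ (∀ i < S.card, ∀ j < S.card, v i = v j → i = j) ∧
      (∀ i, i + 1 < S.card → s(v i, v (i+1)) ∈ E) := by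
  obtain ⟨h1, h2, h3, h4⟩ := hE
  suffices H : ∀ m, 1 ≤ m → m ≤ S.card → ∃ v : ℕ → Pt, (∀ i < m, v i ∈ S) ∧
      (∀ i < m, ∀ j < m, v i = v j → i = j) ∧ (∀ i, i + 1 < m → s(v i, v (i+1)) ∈ E) from
    H S.card (by omega) le_rfl
  intro m hm
  induction m, hm using Nat.le_induction with
  | base =>
    intro _
    obtain ⟨p, hp⟩ : S.Nonempty := Finset.card_pos.mp (by omega)
    exact ⟨fun _ => p, fun _ _ => hp, fun i hi j hj _ => by omega, fun i hi => by omega⟩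
  | succ m hm ih =>
    intro hmS
    obtain ⟨v, hv1, hv2, hv3⟩ := ih (by omega)
    -- an edge leaving the path
    obtain ⟨i, hi, w, hw, hwn⟩ : ∃ i < m, ∃ w, s(v i, w) ∈ E ∧ ∀ j < m, v j ≠ w := by
      by_contra hcon
      push Not at hcon
      have hall : ∀ q ∈ S, ∃ j < m, v j = q := by
        intro q hq
        have := h4 (v 0) (hv1 0 (by omega)) q hq
        induction this with
        | refl => exact ⟨0, by omega, rfl⟩
        | tail hab hbc ih2 =>
          rename_i b c
          have hb : b ∈ S := (h1 _ hbc).2 b (by simp)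
          obtain ⟨j, hj, rfl⟩ := ih2 hb
          exact hcon j hj _ hbc
      have : S ⊆ (Finset.range m).image v := by
        intro q hq
        obtain ⟨j, hj, rfl⟩ := hall q hq
        exact Finset.mem_image_of_mem _ (by simpa using hj)
      have := (Finset.card_le_card this).trans Finset.card_image_le
      simp at this
      omega
    have hwS : w ∈ S := (h1 _ hw).2 w (by simp)
    by_cases him : i + 1 = m
    · refine ⟨fun j => if j < m then v j else w, ?_, ?_, ?_⟩
      · intro j hj
        dsimp only
        split_ifs with h
        · exact hv1 j h
        · exact hwS
      · intro j hj l hl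
        dsimp only
        split_ifs with h h' h'
        · exact hv2 j h l h'
        · intro e; exact absurd e (hwn j h)
        · intro e; exact absurd e.symm (hwn l h')
        · intro _; omega
      · intro j hj
        dsimp only
        rw [if_pos (by omega)]
        split_ifs with h
        · exact hv3 j h
        · have : j = i := by omega
          rw [this]; exact hw
    · by_cases hi0 : i = 0
      · subst hi0
        refine ⟨fun j => if j = 0 then w else v (j-1), ?_, ?_, ?_⟩
        · intro j hj
          dsimp only
          split_ifs with h
          · exact hwS
          · exact hv1 _ (by omega)
        · intro j hj l hl
          dsimp only
          split_ifs with h h' h'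
          · intro _; omega
          · intro e; exact absurd e.symm (hwn _ (by omega))
          · intro e; exact absurd e (hwn _ (by omega))
          · intro e
            have := hv2 _ (by omega) _ (by omega) e
            omega
        · intro j hj
          dsimp only
          rcases j with _ | j
          · simp only [↓reduceIte]
            rw [Sym2.eq_swap]
            simpa using hw
          · simpa using hv3 j (by omega)
      · exfalso
        obtain ⟨k, rfl⟩ : ∃ k, i = k + 1 := ⟨i - 1, by omega⟩
        refine hull_deg hS (p := v (k+1)) (a := v k) (b := v (k+2)) (c := w) ?_ ?_ ?_ ?_ ?_ ?_
        · rw [Sym2.eq_swap]; exact hh _ (hv3 k (by omega))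
        · exact hh _ (hv3 (k+1) (by omega))
        · exact hh _ hw
        · intro e; have := hv2 _ (by omega) _ (by omega) e; omega
        · exact hwn _ (by omega)
        · exact hwn _ (by omega)

/-- path edge set -/
def pathE (n : ℕ) (v : ℕ → Pt) : Finset (Sym2 Pt) :=
  (Finset.range (n-1)).image (fun i => s(v i, v (i+1)))

/-- intermediate tree -/
def tr (n : ℕ) (v : ℕ → Pt) (k i j : ℕ) : Finset (Sym2 Pt) :=
  insert s(v i, v j) ((pathE n v).erase s(v k, v (k+1)))

lemma edge_inj {n : ℕ} {v : ℕ → Pt} (hv : ∀ i < n, ∀ j < n, v i = v j → i = j) {a b c d : ℕ}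
    (hab : a < b) (hb : b < n) (hcd : c < d) (hd : d < n) (h : s(v a, v b) = s(v c, v d)) :
    a = c ∧ b = d := by
  rw [Sym2.eq_iff] at h
  rcases h with ⟨h, h'⟩ | ⟨h, h'⟩
  · exact ⟨hv _ (by omega) _ (by omega) h, hv _ (by omega) _ (by omega) h'⟩
  · have := hv _ (by omega) _ (by omega) h
    have := hv _ (by omega) _ (by omega) h'
    omega

lemma mem_er {n : ℕ} {v : ℕ → Pt} (hv : ∀ i < n, ∀ j < n, v i = v j → i = j) {k l : ℕ}
    (hl : l + 1 < n) (hk : k + 1 < n) (h : l ≠ k) :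
    s(v l, v (l+1)) ∈ (pathE n v).erase s(v k, v (k+1)) := by
  rw [Finset.mem_erase]
  refine ⟨fun e => h (edge_inj hv (by omega) hl (by omega) hk e).1, ?_⟩
  exact Finset.mem_image.mpr ⟨l, by simp; omega, rfl⟩

lemma not_mem_er {n : ℕ} {v : ℕ → Pt} (hv : ∀ i < n, ∀ j < n, v i = v j → i = j) {k i j : ℕ}
    (hi : i ≤ k) (hj : k < j) (hjn : j < n) :
    s(v i, v j) ∉ (pathE n v).erase s(v k, v (k+1)) := by
  rw [Finset.mem_erase]
  rintro ⟨h1, h2⟩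
  obtain ⟨l, hl, e⟩ := Finset.mem_image.mp h2
  simp only [Finset.mem_range] at hl
  obtain ⟨rfl, rfl⟩ := edge_inj hv (by omega) (by omega) (by omega) hjn e
  have : l = k := by omega
  subst this
  exact h1 rfl

lemma card_pathE {n : ℕ} {v : ℕ → Pt} (hv : ∀ i < n, ∀ j < n, v i = v j → i = j) :
    (pathE n v).card = n - 1 := by
  unfold pathE
  rw [Finset.card_image_of_injOn, Finset.card_range]
  intro a ha b hb e
  simp only [Finset.coe_range, Set.mem_Iio] at ha hb
  exact (edge_inj hv (by omega) (by omega) (by omega) (by omega) e).1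

lemma tr_pst {S : Finset Pt} (hS : ConvexPos S) {v : ℕ → Pt} (hv0 : ∀ i < S.card, v i ∈ S)
    (hv : ∀ i < S.card, ∀ j < S.card, v i = v j → i = j)
    (hh : ∀ e ∈ pathE S.card v, IsHullEdge S e) {k i j : ℕ} (hi : i ≤ k) (hj : k < j)
    (hjn : j < S.card) : IsPST S (tr S.card v k i j) := by
  have hdiag : ∀ e ∈ tr S.card v k i j, ¬ e.IsDiag ∧ ∀ p ∈ e, p ∈ S := by
    intro e he
    rcases Finset.mem_insert.mp he with rfl | he
    · constructor
      · rw [Sym2.mk_isDiag_iff]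
        intro e
        have := hv _ (by omega) _ hjn e
        omega
      · intro p hp
        rcases Sym2.mem_iff.mp hp with rfl | rfl
        · exact hv0 _ (by omega)
        · exact hv0 _ hjn
    · obtain ⟨u, w, rfl, hu, hw, huw, -⟩ := hh e (Finset.mem_of_mem_erase he)
      refine ⟨by simpa using huw, ?_⟩
      intro p hp
      rcases Sym2.mem_iff.mp hp with rfl | rfl <;> assumption
  refine ⟨hdiag, ?_, ?_, ?_⟩
  · intro e he f hf hef
    rcases Finset.mem_insert.mp he with h | h
    · rcases Finset.mem_insert.mp hf with h' | h'
      · exact absurd (h.trans h'.symm) hef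
      · have := hull_nocross hS (hh f (Finset.mem_of_mem_erase h')) (hdiag e he).2 (hdiag e he).1 hef.symm
        rintro z ⟨hz, hz'⟩
        exact (this ⟨hz', hz⟩).symm
    · exact hull_nocross hS (hh e (Finset.mem_of_mem_erase h)) (hdiag f hf).2 (hdiag f hf).1 hef
  · unfold tr
    rw [Finset.card_insert_of_notMem (not_mem_er hv hi hj hjn), Finset.card_erase_of_mem,
      card_pathE hv]
    · omega
    · exact Finset.mem_image.mpr ⟨k, by simp; omega, rfl⟩
  · have hsymm : Std.Symm (fun a b => s(a, b) ∈ tr S.card v k i j) :=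
      ⟨fun a b h => by rw [Sym2.eq_swap]; exact h⟩
    have sy : ∀ a b, Relation.ReflTransGen (fun a b => s(a, b) ∈ tr S.card v k i j) a b →
        Relation.ReflTransGen (fun a b => s(a, b) ∈ tr S.card v k i j) b a := by
      intro a b h
      exact Std.Symm.symm _ _ h
    have seg : ∀ a b, a ≤ b → b < S.card → (b ≤ k ∨ k < a) →
        Relation.ReflTransGen (fun a b => s(a, b) ∈ tr S.card v k i j) (v a) (v b) := by
      intro a b hab
      induction b, hab using Nat.le_induction with
      | base => intro _ _; exact .refl
      | succ b hab ih =>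
        intro hb hc
        refine (ih (by omega) (by omega)).tail ?_
        exact Finset.mem_insert_of_mem (mem_er hv hb (by omega) (by omega))
    have fromi : ∀ l < S.card, Relation.ReflTransGen (fun a b => s(a, b) ∈ tr S.card v k i j)
        (v i) (v l) := by
      intro l hl
      by_cases hlk : l ≤ k
      · rcases le_total i l with h | h
        · exact seg _ _ h hl (Or.inl hlk)
        · exact sy _ _ (seg _ _ h (by omega) (Or.inl hi))
      · refine Relation.ReflTransGen.head (b := v j) (Finset.mem_insert_self _ _) ?_
        rcases le_total j l with h | h
        · exact seg _ _ h hl (Or.inr hj)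
        · exact sy _ _ (seg _ _ h hjn (Or.inr (by omega)))
    have hsurj : ∀ p ∈ S, ∃ l < S.card, v l = p := by
      have himg : (Finset.range S.card).image v = S := by
        apply Finset.eq_of_subset_of_card_le
        · intro p hp
          obtain ⟨l, hl, rfl⟩ := Finset.mem_image.mp hp
          exact hv0 l (by simpa using hl)
        · rw [Finset.card_image_of_injOn, Finset.card_range]
          intro a ha b hb e
          exact hv a (by simpa using ha) b (by simpa using hb) e
      intro p hp
      rw [← himg] at hp
      obtain ⟨l, hl, rfl⟩ := Finset.mem_image.mp hp
      exact ⟨l, by simpa using hl, rfl⟩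
    intro p hp q hq
    obtain ⟨a, ha, rfl⟩ := hsurj p hp
    obtain ⟨b, hb, rfl⟩ := hsurj q hq
    exact (sy _ _ (fromi a ha)).trans (fromi b hb)

lemma insert_sdiff_aux {C : Finset (Sym2 Pt)} {e f : Sym2 Pt} (he : e ∉ C) (hef : e ≠ f) :
    insert e C \ insert f C = {e} := by
  ext x
  simp only [Finset.mem_sdiff, Finset.mem_insert, Finset.mem_singleton]
  constructor
  · rintro ⟨h1, h2⟩; tauto
  · rintro rfl; tauto

/-- generic slide -/
lemma slide_gen {S : Finset Pt} (hS : ConvexPos S) {C : Finset (Sym2 Pt)} {p q r : Pt}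
    (h1 : IsPST S (insert s(p, q) C)) (h2 : IsPST S (insert s(p, r) C))
    (hh : ∀ e ∈ C, IsHullEdge S e) (hqr : s(q, r) ∈ C) (hpq : s(p, q) ∉ C) (hpr : s(p, r) ∉ C) :
    EdgeSlide S (insert s(p, q) C) (insert s(p, r) C) := by
  have e1 := h1.1 _ (Finset.mem_insert_self _ _)
  have e2 := h2.1 _ (Finset.mem_insert_self _ _)
  have e3 := h1.1 _ (Finset.mem_insert_of_mem hqr)
  have hp : p ∈ S := e1.2 _ (by simp)
  have hq : q ∈ S := e1.2 _ (by simp)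
  have hr : r ∈ S := e2.2 _ (by simp)
  have npq : p ≠ q := by simpa using e1.1
  have npr : p ≠ r := by simpa using e2.1
  have nqr : q ≠ r := by simpa using e3.1
  have hne : s(p, q) ≠ s(p, r) := by
    intro e
    rw [Sym2.eq_iff] at e
    rcases e with ⟨-, e⟩ | ⟨e, -⟩
    · exact nqr e
    · exact npr e
  refine ⟨h1, h2, p, q, r, insert_sdiff_aux hpq hne, insert_sdiff_aux hpr hne.symm,
    Finset.mem_insert_of_mem hqr, Finset.mem_insert_of_mem hqr, ?_⟩
  have sq : Disjoint (segOf s(p, q)) (triInt p q r) := tri_side (crs_ne hS hp hq hr npq npr nqr)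
  have sr : Disjoint (segOf s(p, r)) (triInt p q r) := by
    have : triInt p q r = triInt p r q := by
      unfold triInt
      rw [Set.pair_comm]
    rw [this]
    exact tri_side (crs_ne hS hp hr hq npr npq nqr.symm)
  intro g hg
  rcases Finset.mem_union.mp hg with hg | hg <;> rcases Finset.mem_insert.mp hg with rfl | hg
  · exact sq
  · exact tri_hull hp hq hr (hh g hg)
  · exact sr
  · exact tri_hull hp hq hr (hh g hg)

lemma reach {S : Finset Pt} (hS : ConvexPos S) {v : ℕ → Pt} (hv0 : ∀ i < S.card, v i ∈ S)
    (hv : ∀ i < S.card, ∀ j < S.card, v i = v j → i = j)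
    (hh : ∀ e ∈ pathE S.card v, IsHullEdge S e) {k : ℕ} (hk : k + 1 < S.card) :
    ReachesIn (EdgeSlide S) (S.card - 2) (tr S.card v k k (k+1)) (tr S.card v k 0 (S.card - 1)) := by
  have hC : ∀ e ∈ (pathE S.card v).erase s(v k, v (k+1)), IsHullEdge S e :=
    fun e he => hh e (Finset.mem_of_mem_erase he)
  refine ⟨S.card - 2, le_rfl,
    fun t => tr S.card v k (k - (t - (S.card - 2 - k))) (min (k+1+t) (S.card - 1)), ?_, ?_, ?_⟩
  · have e1 : k - (0 - (S.card - 2 - k)) = k := by omega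
    have e2 : min (k+1+0) (S.card - 1) = k + 1 := by omega
    dsimp only
    rw [e1, e2]
  · have e1 : k - (S.card - 2 - (S.card - 2 - k)) = 0 := by omega
    have e2 : min (k+1+(S.card - 2)) (S.card - 1) = S.card - 1 := by omega
    dsimp only
    rw [e1, e2]
  · intro t ht
    dsimp only
    by_cases hc : t < S.card - 2 - k
    · have e1 : k - (t - (S.card - 2 - k)) = k := by omega
      have e2 : min (k+1+t) (S.card - 1) = k + 1 + t := by omega
      have e3 : k - (t + 1 - (S.card - 2 - k)) = k := by omega
      have e4 : min (k+1+(t+1)) (S.card - 1) = k + 1 + t + 1 := by omega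
      rw [e1, e2, e3, e4]
      exact slide_gen hS (tr_pst hS hv0 hv hh (by omega) (by omega) (by omega))
        (tr_pst hS hv0 hv hh (by omega) (by omega) (by omega)) hC
        (mem_er hv (by omega) hk (by omega)) (not_mem_er hv (by omega) (by omega) (by omega))
        (not_mem_er hv (by omega) (by omega) (by omega))
    · obtain ⟨i, e1⟩ : ∃ i, k - (t - (S.card - 2 - k)) = i + 1 :=
        ⟨k - (t - (S.card - 2 - k)) - 1, by omega⟩
      have e2 : min (k+1+t) (S.card - 1) = S.card - 1 := by omega
      have e3 : k - (t + 1 - (S.card - 2 - k)) = i := by omega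
      have e4 : min (k+1+(t+1)) (S.card - 1) = S.card - 1 := by omega
      rw [e1, e2, e3, e4]
      have p1 := tr_pst hS hv0 hv hh (k := k) (i := i + 1) (j := S.card - 1) (by omega) (by omega) (by omega)
      have p2 := tr_pst hS hv0 hv hh (k := k) (i := i) (j := S.card - 1) (by omega) (by omega) (by omega)
      have m := mem_er hv (k := k) (l := i) (by omega) hk (by omega)
      have n1 := not_mem_er hv (k := k) (i := i + 1) (j := S.card - 1) (by omega) (by omega) (by omega)
      have n2 := not_mem_er hv (k := k) (i := i) (j := S.card - 1) (by omega) (by omega) (by omega)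
      unfold tr at p1 p2 ⊢
      rw [Sym2.eq_swap (a := v (i+1)) (b := v (S.card - 1))] at p1 n1 ⊢
      rw [Sym2.eq_swap (a := v i) (b := v (S.card - 1))] at p2 n2 ⊢
      have m' : s(v (i+1), v i) ∈ (pathE S.card v).erase s(v k, v (k+1)) := by
        rw [Sym2.eq_swap (a := v (i+1)) (b := v i)]; exact m
      exact slide_gen hS p1 p2 hC m' n1 n2

/-- two spanning paths consisting of convex hull edges can be transformed into
one another by at most `n - 2` edge slides. -/
theorem stmt_7 :
    ∀ S : Finset Pt, 3 ≤ S.card → ConvexPos S →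
      ∀ P₁ P₂ : Finset (Sym2 Pt),
        IsPST S P₁ → (∀ e ∈ P₁, IsHullEdge S e) →
        IsPST S P₂ → (∀ e ∈ P₂, IsHullEdge S e) →
        ReachesIn (EdgeSlide S) (S.card - 2) P₁ P₂ := by

  intro S hn hS P₁ P₂ h1 hh1 h2 hh2
  obtain ⟨v, hv0, hv, hE⟩ := path_exists hS hn h1 hh1
  have hP1 : pathE S.card v = P₁ := by
    apply Finset.eq_of_subset_of_card_le
    · intro e he
      obtain ⟨i, hi, rfl⟩ := Finset.mem_image.mp he
      simp only [Finset.mem_range] at hi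
      exact hE i (by omega)
    · rw [card_pathE hv]
      have := h1.2.2.1
      omega
  have himg : (Finset.range S.card).image v = S := by
    apply Finset.eq_of_subset_of_card_le
    · intro p hp
      obtain ⟨l, hl, rfl⟩ := Finset.mem_image.mp hp
      exact hv0 l (by simpa using hl)
    · rw [Finset.card_image_of_injOn, Finset.card_range]
      intro a ha b hb e
      exact hv a (by simpa using ha) b (by simpa using hb) e
  have hsurj : ∀ p ∈ S, ∃ l < S.card, v l = p := by
    intro p hp
    rw [← himg] at hp
    obtain ⟨l, hl, rfl⟩ := Finset.mem_image.mp hp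
    exact ⟨l, by simpa using hl, rfl⟩
  by_cases heq : P₁ = P₂
  · exact ⟨0, by omega, fun _ => P₁, rfl, heq, fun i hi => by omega⟩
  have hcard : P₁.card = P₂.card := by
    have := h1.2.2.1
    have := h2.2.2.1
    omega
  have key : ∀ a b, a < b → b < S.card → s(v a, v b) ∈ P₂ → s(v a, v b) ∉ P₁ →
      a = 0 ∧ b = S.card - 1 := by
    intro a b hab hb hg hgn
    have hne : b ≠ a + 1 := by
      rintro rfl
      exact hgn (hE a hb)
    constructor
    · by_contra ha
      obtain ⟨c, rfl⟩ : ∃ c, a = c + 1 := ⟨a - 1, by omega⟩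
      refine hull_deg hS (p := v (c+1)) (a := v c) (b := v (c+2)) (c := v b) ?_ ?_ (hh2 _ hg) ?_ ?_ ?_
      · rw [Sym2.eq_swap]; exact hh1 _ (hE c (by omega))
      · exact hh1 _ (hE (c+1) (by omega))
      all_goals
        intro e
        have := hv _ (by omega) _ (by omega) e
        omega
    · by_contra hb'
      obtain ⟨c, rfl⟩ : ∃ c, b = c + 1 := ⟨b - 1, by omega⟩
      refine hull_deg hS (p := v (c+1)) (a := v c) (b := v (c+2)) (c := v a) ?_ ?_ ?_ ?_ ?_ ?_
      · rw [Sym2.eq_swap]; exact hh1 _ (hE c (by omega))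
      · exact hh1 _ (hE (c+1) (by omega))
      · rw [Sym2.eq_swap]; exact hh2 _ hg
      all_goals
        intro e
        have := hv _ (by omega) _ (by omega) e
        omega
  have key2 : ∀ g ∈ P₂, g ∉ P₁ → g = s(v 0, v (S.card - 1)) := by
    intro g hg hgn
    induction g using Sym2.ind with
    | _ p q =>
    have hd := h2.1 _ hg
    obtain ⟨a, ha, rfl⟩ := hsurj p (hd.2 _ (by simp))
    obtain ⟨b, hb, rfl⟩ := hsurj q (hd.2 _ (by simp))
    have hab : a ≠ b := by
      rintro rfl
      exact hd.1 (by simp)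
    rcases lt_or_gt_of_ne hab with h | h
    · obtain ⟨rfl, rfl⟩ := key a b h hb hg hgn
      rfl
    · rw [Sym2.eq_swap] at hg hgn ⊢
      obtain ⟨rfl, rfl⟩ := key b a h ha hg hgn
      rfl
  obtain ⟨e, he1, he2⟩ : ∃ e ∈ P₁, e ∉ P₂ := by
    by_contra hcon
    push Not at hcon
    exact heq (Finset.eq_of_subset_of_card_le hcon hcard.ge)
  obtain ⟨k, hk, rfl⟩ := Finset.mem_image.mp (hP1 ▸ he1)
  simp only [Finset.mem_range] at hk
  have hk' : k + 1 < S.card := by omega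
  have hr := reach hS hv0 hv (hP1 ▸ hh1) hk'
  have t1 : tr S.card v k k (k+1) = P₁ := by
    unfold tr
    rw [hP1]
    exact Finset.insert_erase he1
  have t2 : tr S.card v k 0 (S.card - 1) = P₂ := by
    symm
    apply Finset.eq_of_subset_of_card_le
    · intro g hg
      unfold tr
      rw [hP1]
      by_cases hgn : g ∈ P₁
      · refine Finset.mem_insert_of_mem (Finset.mem_erase.mpr ⟨?_, hgn⟩)
        rintro rfl
        exact he2 hg
      · rw [key2 g hg hgn]
        exact Finset.mem_insert_self _ _
    · have := (tr_pst hS hv0 hv (hP1 ▸ hh1) (k := k) (i := 0) (j := S.card - 1) (by omega) (by omega) (by omega)).2.2.1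
      have := h2.2.2.1
      omega
  rw [t1, t2] at hr
  exact hr
end
end

section
/- Let S be a finite set of points in the plane in general position and let T₁ = (S,E₁), T₂ = (S,E₂) ∈ 𝒯(S) be related by a simultaneous edge slide with bijection π : E₁ ∖ E₂ → E₂ ∖ E₁ such that for every e ∈ E₁ ∖ E₂ the edges e and π(e) are adjacent and the third edge of the triangle formed by e and π(e) lies in E₁ ∩ E₂. Then for every subset Ê ⊆ E₁ ∖ E₂, the graph (S, (E₁ ∖ Ê) ∪ π(Ê)) is a noncrossing straight-line spanning tree in 𝒯(S); consequently, a sequence of single edge slides can successively replace every edge e ∈ E₁ ∖ E₂ with π(e), transforming T₁ into T₂. -/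
open scoped Classical

noncomputable section

def cr (p q r : Pt) : ℝ := (q.1 - p.1) * (r.2 - p.2) - (q.2 - p.2) * (r.1 - p.1)

lemma collinear_of_cr {p q r : Pt} (hpq : p ≠ q) (h : cr p q r = 0) :
    Collinear ℝ ({p, q, r} : Set Pt) := by
  rw [collinear_iff_of_mem (p₀ := p) (by simp)]
  refine ⟨q - p, ?_⟩
  unfold cr at h
  intro y hy
  simp only [Set.mem_insert_iff, Set.mem_singleton_iff] at hy
  rcases hy with rfl | rfl | rfl
  · exact ⟨0, by simp⟩
  · exact ⟨1, by simp⟩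
  · by_cases h1 : q.1 - p.1 = 0
    · have h2 : q.2 - p.2 ≠ 0 := by
        intro h2
        exact hpq (Prod.ext (by linarith) (by linarith))
      refine ⟨(y.2 - p.2) / (q.2 - p.2), ?_⟩
      rw [h1] at h
      have h3 : y.1 - p.1 = 0 := by
        rcases mul_eq_zero.1 (show (q.2 - p.2) * (y.1 - p.1) = 0 by linarith) with h | h
        · exact absurd h h2
        · exact h
      ext
      · simp [h1]; linarith
      · simp; field_simp; ring
    · refine ⟨(y.1 - p.1) / (q.1 - p.1), ?_⟩
      ext
      · simp; field_simp; ring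
      · simp; field_simp; linarith

lemma tri_mem {p r q y : Pt} (h0 : cr p r q ≠ 0) (h1 : 0 < cr p r y * cr p r q)
    (h2 : 0 < cr r q y * cr p r q) (h3 : 0 < cr q p y * cr p r q) :
    y ∈ convexHull ℝ ({p, q, r} : Set Pt) := by
  have hs : 0 < cr p r q * cr p r q := mul_self_pos.2 h0
  have key := (convex_convexHull ℝ ({p, q, r} : Set Pt)).sum_mem (t := Finset.univ)
    (w := ![cr r q y * cr p r q / (cr p r q * cr p r q), cr p r y * cr p r q / (cr p r q * cr p r q),
      cr q p y * cr p r q / (cr p r q * cr p r q)]) (z := ![p, q, r])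
    (by intro i _; fin_cases i <;> simp <;> positivity)
    (by
      simp [Fin.sum_univ_three]
      field_simp
      unfold cr; ring)
    (by intro i _; apply subset_convexHull; fin_cases i <;> simp)
  convert key using 1
  simp only [Fin.sum_univ_three]
  ext
  · simp; field_simp; unfold cr; ring
  · simp; field_simp; unfold cr; ring

lemma cr_cont {p q : Pt} : Continuous (fun y => cr p q y) := by unfold cr; fun_prop

lemma tri_int {p r q y : Pt} (h0 : cr p r q ≠ 0) (h1 : 0 < cr p r y * cr p r q)
    (h2 : 0 < cr r q y * cr p r q) (h3 : 0 < cr q p y * cr p r q) :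
    y ∈ triInt p q r := by
  refine mem_interior.2 ⟨{y | 0 < cr p r y * cr p r q ∧ 0 < cr r q y * cr p r q ∧
    0 < cr q p y * cr p r q}, ?_, ?_, h1, h2, h3⟩
  · rintro z ⟨a, b, c⟩; exact tri_mem h0 a b c
  · have c1 := @cr_cont p r
    have c2 := @cr_cont r q
    have c3 := @cr_cont q p
    exact ((isOpen_lt continuous_const (c1.mul continuous_const))).inter
      ((isOpen_lt continuous_const (c2.mul continuous_const)).inter
      (isOpen_lt continuous_const (c3.mul continuous_const)))

lemma enter {p r q x a : Pt} (h0 : cr p r q ≠ 0) (hx : x ∈ openSegment ℝ p r)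
    (ha : 0 < cr p r a * cr p r q) : ∃ y ∈ segment ℝ x a, y ∈ triInt p q r := by
  obtain ⟨u, v, hu, hv, huv, rfl⟩ := hx
  have hs : 0 < cr p r q * cr p r q := mul_self_pos.2 h0
  set x : Pt := u • p + v • r with hxd
  have e1 : cr p r x = 0 := by
    obtain rfl : u = 1 - v := by linarith
    simp [hxd, cr]; ring
  have e2 : cr r q x = u * cr p r q := by
    obtain rfl : u = 1 - v := by linarith
    simp [hxd, cr]; ring
  have e3 : cr q p x = v * cr p r q := by
    obtain rfl : u = 1 - v := by linarith
    simp [hxd, cr]; ring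
  have p2 : 0 < cr r q x * cr p r q := by rw [e2, mul_assoc]; positivity
  have p3 : 0 < cr q p x * cr p r q := by rw [e3, mul_assoc]; positivity
  have hc : ∀ c d : Pt, 0 < cr c d x * cr p r q →
      ∀ᶠ t : ℝ in nhdsWithin 0 (Set.Ioi 0), 0 < cr c d (x + t • (a - x)) * cr p r q := by
    intro c d h
    apply Filter.Eventually.filter_mono nhdsWithin_le_nhds
    have c1 := @cr_cont c d
    have c2 : Continuous (fun t : ℝ => cr c d (x + t • (a - x)) * cr p r q) :=
      (c1.comp (by fun_prop : Continuous (fun t : ℝ => x + t • (a - x)))).mul continuous_const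
    exact c2.continuousAt.eventually (lt_mem_nhds (by simpa using h))
  have h1 : ∀ᶠ t : ℝ in nhdsWithin 0 (Set.Ioi 0), t < 1 :=
    Filter.Eventually.filter_mono nhdsWithin_le_nhds (gt_mem_nhds one_pos)
  have h2 : ∀ᶠ t : ℝ in nhdsWithin 0 (Set.Ioi 0), 0 < t := self_mem_nhdsWithin
  obtain ⟨t, t1, t2, t3, t4⟩ := ((hc _ _ p2).and ((hc _ _ p3).and (h1.and h2))).exists
  refine ⟨x + t • (a - x), ?_, tri_int h0 ?_ t1 t2⟩
  · rw [segment_eq_image']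
    exact ⟨t, ⟨t4.le, t3.le⟩, rfl⟩
  · have : cr p r (x + t • (a - x)) = (1 - t) * cr p r x + t * cr p r a := by
      simp [cr]; ring
    rw [this, e1, mul_zero, zero_add, mul_assoc]
    positivity

lemma gp_seg {S : Finset Pt} (hS : GenPos S) {a b x : Pt} (ha : a ∈ S) (hb : b ∈ S) (hx : x ∈ S)
    (hab : a ≠ b) (h : x ∈ segment ℝ a b) : x = a ∨ x = b := by
  by_contra hc
  push Not at hc
  exact hS a ha x hx b hb hc.1.symm hab hc.2 (mem_segment_iff_wbtw.1 h).collinear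

lemma gp_cr {S : Finset Pt} (hS : GenPos S) {a b x : Pt} (ha : a ∈ S) (hb : b ∈ S) (hx : x ∈ S)
    (hab : a ≠ b) (h : cr a b x = 0) : x = a ∨ x = b := by
  by_contra hc
  push Not at hc
  exact hS a ha b hb x hx hab hc.1.symm hc.2.symm (collinear_of_cr hab h)

lemma cross_key {S : Finset Pt} (hS : GenPos S) {a b p q r : Pt} (ha : a ∈ S) (hb : b ∈ S)
    (hp : p ∈ S) (hq : q ∈ S) (hr : r ∈ S) (hab : a ≠ b) (hpq : p ≠ q) (hpr : p ≠ r) (hqr : q ≠ r)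
    (hne : s(a, b) ≠ s(p, r)) (hd : Disjoint (segOf s(a, b)) (triInt p q r)) :
    NoCrossPair s(a, b) s(p, r) := by
  have h0 : cr p r q ≠ 0 := by
    intro h
    rcases gp_cr hS hp hr hq hpr h with h | h
    · exact hpq h.symm
    · exact hqr h
  rintro x ⟨h1, h2⟩
  change x ∈ segment ℝ a b at h1
  change x ∈ segment ℝ p r at h2
  change x ∈ s(a, b) ∧ x ∈ s(p, r)
  rw [Sym2.mem_iff, Sym2.mem_iff]
  change Disjoint (segment ℝ a b) _ at hd
  by_cases hxab : x = a ∨ x = b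
  · have hx : x ∈ S := by rcases hxab with rfl | rfl <;> assumption
    exact ⟨hxab, gp_seg hS hp hr hx hpr h2⟩
  by_cases hxpr : x = p ∨ x = r
  · have hx : x ∈ S := by rcases hxpr with rfl | rfl <;> assumption
    exact ⟨gp_seg hS ha hb hx hab h1, hxpr⟩
  exfalso
  push Not at hxab hxpr
  have o1 := mem_openSegment_of_ne_left_right hxab.1.symm hxab.2.symm h1
  have o2 := mem_openSegment_of_ne_left_right hxpr.1.symm hxpr.2.symm h2
  have nope : ∀ c ∈ segment ℝ a b, ¬ 0 < cr p r c * cr p r q := by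
    intro c hc h
    obtain ⟨y, hy, hy'⟩ := enter h0 o2 h
    exact Set.disjoint_left.1 hd ((convex_segment a b).segment_subset h1 hc hy) hy'
  have na := nope a (left_mem_segment ℝ a b)
  have nb := nope b (right_mem_segment ℝ a b)
  have hx0 : cr p r x = 0 := by
    obtain ⟨u, v, hu, hv, huv, rfl⟩ := o2
    obtain rfl : u = 1 - v := by linarith
    simp [cr]; ring
  obtain ⟨u, v, hu, hv, huv, rfl⟩ := o1
  have hx1 : u * (cr p r a * cr p r q) + v * (cr p r b * cr p r q) = 0 := by
    have : cr p r (u • a + v • b) = u * cr p r a + v * cr p r b := by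
      obtain rfl : u = 1 - v := by linarith
      simp [cr]; ring
    rw [this] at hx0
    linear_combination cr p r q * hx0
  push Not at na nb
  have m1 := mul_nonpos_of_nonneg_of_nonpos hu.le na
  have m2 := mul_nonpos_of_nonneg_of_nonpos hv.le nb
  have a0 : cr p r a = 0 := by
    have : u * (cr p r a * cr p r q) = 0 := by linarith
    simpa [hu.ne', h0] using this
  have b0 : cr p r b = 0 := by
    have : v * (cr p r b * cr p r q) = 0 := by linarith
    simpa [hv.ne', h0] using this
  rcases gp_cr hS hp hr ha hpr a0 with rfl | rfl <;>
  rcases gp_cr hS hp hr hb hpr b0 with rfl | rfl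
  · exact hab rfl
  · exact hne rfl
  · exact hne Sym2.eq_swap
  · exact hab rfl

lemma NoCrossPair.symm' {e f : Sym2 Pt} (h : NoCrossPair e f) : NoCrossPair f e :=
  fun _ hx => (h hx.symm).symm

lemma reaches_snoc {α : Type*} {step : α → α → Prop} {m : ℕ} {x y z : α}
    (h : ReachesIn step m x y) (hs : step y z) : ReachesIn step (m + 1) x z := by
  obtain ⟨k, hk, f, h0, h1, h2⟩ := h
  refine ⟨k + 1, by omega, fun i => if i ≤ k then f i else z, by simp [h0], by simp, ?_⟩
  intro i hi
  rcases Nat.lt_or_ge i k with h | h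
  · have := h2 i h
    simpa [h.le, Nat.succ_le_of_lt h] using this
  · obtain rfl : i = k := by omega
    simpa [h1] using hs

/-- if `T₁` and `T₂` are related by a simultaneous edge slide whose pairs are
adjacent with third edge in `E₁ ∩ E₂`, then replacing any subset `Ehat ⊆ E₁ \ E₂` by `π(Ehat)`
yields a noncrossing spanning tree; consequently single edge slides transform `T₁` to `T₂`. -/
theorem stmt_9 :
    ∀ S : Finset Pt, GenPos S → ∀ E₁ E₂ : Finset (Sym2 Pt), IsPST S E₁ → IsPST S E₂ →
      ∀ π : Sym2 Pt → Sym2 Pt,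
        Set.BijOn π ↑(E₁ \ E₂) ↑(E₂ \ E₁) →
        (∀ e ∈ E₁ \ E₂, ∃ p q r : Pt, e = s(p, q) ∧ π e = s(p, r) ∧
          s(q, r) ∈ E₁ ∧ s(q, r) ∈ E₂ ∧
          ∀ g ∈ E₁ ∪ E₂, Disjoint (segOf g) (triInt p q r)) →
        (∀ Ehat ⊆ E₁ \ E₂, IsPST S ((E₁ \ Ehat) ∪ Ehat.image π)) ∧
        ReachesIn (EdgeSlide S) (E₁ \ E₂).card E₁ E₂ := by
  intro S hS E₁ E₂ hT₁ hT₂ π hπ H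
  have hmaps : ∀ e ∈ E₁ \ E₂, π e ∈ E₂ \ E₁ := fun e he => by
    have := hπ.mapsTo (Finset.mem_coe.2 he)
    exact_mod_cast this
  have hinj : ∀ e ∈ E₁ \ E₂, ∀ f ∈ E₁ \ E₂, π e = π f → e = f := fun e he f hf h =>
    hπ.injOn (Finset.mem_coe.2 he) (Finset.mem_coe.2 hf) h
  -- the mixed noncrossing case
  have mix : ∀ e ∈ E₁, ∀ g ∈ E₁ \ E₂, NoCrossPair e (π g) := by
    intro e he g hg
    obtain ⟨p, q, r, hgp, hpg, hqr1, hqr2, hd⟩ := H g hg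
    have hg1 := (Finset.mem_sdiff.1 hg).1
    have hm := Finset.mem_sdiff.1 (hmaps g hg)
    obtain ⟨n1, m1⟩ := hT₁.1 g hg1
    obtain ⟨n2, m2⟩ := hT₂.1 _ hm.1
    obtain ⟨n3, m3⟩ := hT₁.1 _ hqr1
    obtain ⟨n4, m4⟩ := hT₁.1 e he
    have hne : e ≠ π g := by rintro rfl; exact hm.2 he
    have hde := hd e (Finset.mem_union_left _ he)
    rw [hpg] at n2 m2 hne ⊢
    rw [hgp] at n1 m1
    induction e using Sym2.ind with
    | _ a b =>
      exact cross_key hS (m4 a (by simp)) (m4 b (by simp)) (m1 p (by simp)) (m1 q (by simp))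
        (m2 r (by simp)) (by simpa using n4) (by simpa using n1) (by simpa using n2)
        (by simpa using n3) hne hde
  have main : ∀ Ehat ⊆ E₁ \ E₂, IsPST S ((E₁ \ Ehat) ∪ Ehat.image π) := by
    intro F hF
    have hmem : ∀ e ∈ (E₁ \ F) ∪ F.image π, e ∈ E₁ ∨ ∃ g ∈ E₁ \ E₂, π g = e := by
      intro e he
      rcases Finset.mem_union.1 he with h | h
      · exact Or.inl (Finset.mem_sdiff.1 h).1
      · obtain ⟨g, hg, rfl⟩ := Finset.mem_image.1 h
        exact Or.inr ⟨g, hF hg, rfl⟩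
    refine ⟨?_, ?_, ?_, ?_⟩
    · intro e he
      rcases hmem e he with h | ⟨g, hg, rfl⟩
      · exact hT₁.1 e h
      · exact hT₂.1 _ (Finset.mem_sdiff.1 (hmaps g hg)).1
    · intro e he f hf hef
      rcases hmem e he with h | ⟨g, hg, rfl⟩ <;> rcases hmem f hf with h' | ⟨g', hg', rfl⟩
      · exact hT₁.2.1 e h f h' hef
      · exact mix e h g' hg'
      · exact (mix f h' g hg).symm'
      · exact hT₂.2.1 _ (Finset.mem_sdiff.1 (hmaps g hg)).1 _ (Finset.mem_sdiff.1 (hmaps g' hg')).1 hef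
    · have hdis : Disjoint (E₁ \ F) (F.image π) := by
        rw [Finset.disjoint_left]
        intro e he he'
        obtain ⟨g, hg, rfl⟩ := Finset.mem_image.1 he'
        exact (Finset.mem_sdiff.1 (hmaps g (hF hg))).2 (Finset.mem_sdiff.1 he).1
      have hF1 : F ⊆ E₁ := hF.trans Finset.sdiff_subset
      rw [Finset.card_union_of_disjoint hdis, Finset.card_image_of_injOn
        (fun e he f hf h => hinj e (hF he) f (hF hf) h), Finset.card_sdiff_add_card_eq_card hF1]
      exact hT₁.2.2.1
    · intro x hx y hy
      have hc := hT₁.2.2.2 x hx y hy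
      refine Relation.ReflTransGen.trans_induction_on (r := fun a b => s(a, b) ∈ E₁)
        (motive := fun {a b} _ => Relation.ReflTransGen
          (fun a b => s(a, b) ∈ (E₁ \ F) ∪ F.image π) a b) hc (fun _ => .refl) ?_
        (fun _ _ h h' => h.trans h')
      intro a b hab
      by_cases hf : s(a, b) ∈ F
      · obtain ⟨p, q, r, hgp, hpg, hqr1, hqr2, -⟩ := H _ (hF hf)
        have h1 : s(p, r) ∈ (E₁ \ F) ∪ F.image π :=
          Finset.mem_union_right _ (Finset.mem_image.2 ⟨_, hf, hpg⟩)
        have h2 : s(q, r) ∈ (E₁ \ F) ∪ F.image π :=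
          Finset.mem_union_left _ (Finset.mem_sdiff.2 ⟨hqr1, fun h =>
            (Finset.mem_sdiff.1 (hF h)).2 hqr2⟩)
        have h1' := h1
        have h2' := h2
        rw [Sym2.eq_swap] at h1' h2'
        rcases Sym2.eq_iff.1 hgp with ⟨rfl, rfl⟩ | ⟨rfl, rfl⟩
        · exact (Relation.ReflTransGen.single h1).tail h2'
        · exact (Relation.ReflTransGen.single h2).tail h1'
      · exact .single (Finset.mem_union_left _ (Finset.mem_sdiff.2 ⟨hab, hf⟩))
  refine ⟨main, ?_⟩
  have steps : ∀ F : Finset (Sym2 Pt), F ⊆ E₁ \ E₂ →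
      ReachesIn (EdgeSlide S) F.card E₁ ((E₁ \ F) ∪ F.image π) := by
    intro F
    induction F using Finset.induction_on with
    | empty => intro _; exact ⟨0, le_rfl, fun _ => E₁, rfl, by simp, by simp⟩
    | insert e F he ih =>
      intro hF
      have hF' : F ⊆ E₁ \ E₂ := (Finset.subset_insert _ _).trans hF
      have heE := hF (Finset.mem_insert_self e F)
      have hm := Finset.mem_sdiff.1 (hmaps e heE)
      have he1 := Finset.mem_sdiff.1 heE
      rw [Finset.card_insert_of_notMem he]
      refine reaches_snoc (ih hF') ⟨main _ hF', main _ hF, ?_⟩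
      obtain ⟨p, q, r, hgp, hpg, hqr1, hqr2, hd⟩ := H e heE
      have hsub : ∀ G ⊆ E₁ \ E₂, (E₁ \ G) ∪ G.image π ⊆ E₁ ∪ E₂ := by
        intro G hG f hf
        rcases Finset.mem_union.1 hf with h | h
        · exact Finset.mem_union_left _ (Finset.mem_sdiff.1 h).1
        · obtain ⟨g, hg, rfl⟩ := Finset.mem_image.1 h
          exact Finset.mem_union_right _ (Finset.mem_sdiff.1 (hmaps g (hG hg))).1
      have hqr : ∀ G ⊆ E₁ \ E₂, s(q, r) ∈ (E₁ \ G) ∪ G.image π := fun G hG =>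
        Finset.mem_union_left _ (Finset.mem_sdiff.2 ⟨hqr1, fun h =>
            (Finset.mem_sdiff.1 (hG h)).2 hqr2⟩)
      have hnot : ∀ g ∈ F, π g ≠ π e := fun g hg h => he (hinj g (hF' hg) e heE h ▸ hg)
      have hnot1 : ∀ g ∈ F, π g ∉ E₁ := fun g hg => (Finset.mem_sdiff.1 (hmaps g (hF' hg))).2
      refine ⟨p, q, r, ?_, ?_, hqr _ hF', hqr _ hF, ?_⟩
      · rw [← hgp]
        ext f
        simp only [Finset.mem_sdiff, Finset.mem_union, Finset.mem_image, Finset.mem_insert,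
          Finset.mem_singleton]
        grind
      · rw [← hpg]
        ext f
        simp only [Finset.mem_sdiff, Finset.mem_union, Finset.mem_image, Finset.mem_insert,
          Finset.mem_singleton]
        grind
      · intro g hg
        apply hd
        rcases Finset.mem_union.1 hg with h | h
        · exact hsub _ hF' h
        · exact hsub _ hF h
  have := steps (E₁ \ E₂) subset_rfl
  have him : (E₁ \ E₂).image π = E₂ \ E₁ := by
    apply Finset.coe_injective
    rw [Finset.coe_image]
    exact hπ.image_eq
  rw [him] at this
  have hfin : E₁ \ (E₁ \ E₂) ∪ E₂ \ E₁ = E₂ := by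
    ext f
    simp only [Finset.mem_sdiff, Finset.mem_union]
    tauto
  rwa [hfin] at this
end
end

section
/- There exists a constant c > 0 such that for every integer n ≥ 3 and every set S of n points in the plane in convex position, there exist two trees T₁, T₂ ∈ 𝒯(S) such that every sequence of simultaneous edge slides transforming T₁ into T₂ has length at least c·log n. -/
open scoped Classical

noncomputable section

def dt (a b c : Pt) : ℝ := (b.1 - a.1) * (c.2 - a.2) - (b.2 - a.2) * (c.1 - a.1)

lemma dt_ne {S : Finset Pt} (hS : ConvexPos S) {p q r : Pt} (hp : p ∈ S) (hq : q ∈ S)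
    (hr : r ∈ S) (hpq : p ≠ q) (hpr : p ≠ r) (hqr : q ≠ r) : dt p q r ≠ 0 := by
  intro h
  have key : ∀ x y z : Pt, x ∈ S → y ∈ S → z ∈ S → x ≠ y → y ≠ z → ¬ Wbtw ℝ x y z := by
    intro x y z hx hy hz hxy hyz hw
    apply hS y hy
    have h1 : segment ℝ x z ⊆ convexHull ℝ ((S : Set Pt) \ {y}) := by
      apply segment_subset_convexHull
      · exact ⟨hx, by simpa using hxy⟩
      · exact ⟨hz, by simpa using hyz.symm⟩
    exact h1 hw.mem_segment
  have hc : Collinear ℝ ({p, q, r} : Set Pt) := by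
    rw [collinear_iff_of_mem (p₀ := p) (by simp)]
    refine ⟨q - p, ?_⟩
    have hex : ∃ t : ℝ, r = t • (q - p) +ᵥ p := by
      unfold dt at h
      by_cases h1 : q.1 - p.1 = 0
      · have h2 : q.2 - p.2 ≠ 0 := by
          intro h2
          apply hpq
          ext <;> linarith
        refine ⟨(r.2 - p.2) / (q.2 - p.2), ?_⟩
        ext
        · simp only [vadd_eq_add, Prod.fst_add, Prod.smul_fst, Prod.fst_sub, smul_eq_mul]
          field_simp
          nlinarith
        · simp only [vadd_eq_add, Prod.snd_add, Prod.smul_snd, Prod.snd_sub, smul_eq_mul]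
          field_simp
          ring
      · refine ⟨(r.1 - p.1) / (q.1 - p.1), ?_⟩
        ext
        · simp only [vadd_eq_add, Prod.fst_add, Prod.smul_fst, Prod.fst_sub, smul_eq_mul]
          field_simp
          ring
        · simp only [vadd_eq_add, Prod.snd_add, Prod.smul_snd, Prod.snd_sub, smul_eq_mul]
          field_simp
          nlinarith
    intro x hx
    simp only [Set.mem_insert_iff, Set.mem_singleton_iff] at hx
    rcases hx with rfl | rfl | rfl
    · exact ⟨0, by simp⟩
    · exact ⟨1, by simp⟩
    · exact hex
  rcases hc.wbtw_or_wbtw_or_wbtw with hw | hw | hw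
  · exact key _ _ _ hp hq hr hpq hqr hw
  · exact key _ _ _ hq hr hp hqr hpr.symm hw
  · exact key _ _ _ hr hp hq hpr.symm hpq hw

lemma tri_mem_s11 (v a c x : Pt) (D : ℝ) (hD : D = dt v a c) (h1 : 0 < dt v x c / D)
    (h2 : 0 < dt v a x / D) (h3 : dt v x c / D + dt v a x / D < 1) :
    x ∈ triInt c v a := by
  have hD0 : D ≠ 0 := by
    rintro h; simp [h] at h1
  unfold triInt
  rw [mem_interior]
  refine ⟨{x | 0 < dt v x c / D ∧ 0 < dt v a x / D ∧ dt v x c / D + dt v a x / D < 1}, ?_, ?_,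
    h1, h2, h3⟩
  · rintro y ⟨k1, k2, k3⟩
    have hc : c ∈ convexHull ℝ ({c, v, a} : Set Pt) := subset_convexHull _ _ (by simp)
    have hv : v ∈ convexHull ℝ ({c, v, a} : Set Pt) := subset_convexHull _ _ (by simp)
    have ha : a ∈ convexHull ℝ ({c, v, a} : Set Pt) := subset_convexHull _ _ (by simp)
    have hconv := convex_convexHull ℝ ({c, v, a} : Set Pt)
    have hy : y = (dt v y c / D) • a + (dt v a y / D) • c
        + (1 - dt v y c / D - dt v a y / D) • v := by
      ext
      · simp only [Prod.fst_add, Prod.smul_fst, smul_eq_mul]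
        field_simp
        rw [hD]; unfold dt; ring
      · simp only [Prod.snd_add, Prod.smul_snd, smul_eq_mul]
        field_simp
        rw [hD]; unfold dt; ring
    have := hconv.sum_mem (t := (Finset.univ : Finset (Fin 3)))
      (w := ![dt v y c / D, dt v a y / D, 1 - dt v y c / D - dt v a y / D]) (z := ![a, c, v])
      (by intro i _; fin_cases i <;> simp <;> linarith)
      (by simp [Fin.sum_univ_three])
      (by intro i _; fin_cases i <;> simp [ha, hc, hv])
    rw [hy]
    simpa [Fin.sum_univ_three] using this
  · have c1 : Continuous fun x => dt v x c / D := by unfold dt; fun_prop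
    have c2 : Continuous fun x => dt v a x / D := by unfold dt; fun_prop
    exact ((isOpen_lt continuous_const c1).inter ((isOpen_lt continuous_const c2).inter
      (isOpen_lt (c1.add c2) continuous_const)))

lemma tri_hit (v a b c : Pt) (D : ℝ) (hD : D = dt v a c) (h1 : 0 < dt v b c / D)
    (h2 : 0 < dt v a b / D) : ¬ Disjoint (segOf s(b, v)) (triInt c v a) := by
  intro h
  set s := dt v b c / D + dt v a b / D with hs
  have hs0 : 0 < s := by positivity
  set t : ℝ := 1 / (1 + s) with ht
  have ht0 : 0 < t := by positivity
  have ht1 : t ≤ 1 := by rw [ht, div_le_one (by positivity)]; linarith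
  have hts : t * s < 1 := by
    rw [ht, one_div, inv_mul_lt_iff₀ (by positivity)]; linarith
  let x : Pt := t • b + (1 - t) • v
  have e1 : dt v x c / D = t * (dt v b c / D) := by
    rw [← mul_div_assoc]; congr 1; simp [dt, x]; ring
  have e2 : dt v a x / D = t * (dt v a b / D) := by
    rw [← mul_div_assoc]; congr 1; simp [dt, x]; ring
  refine (Set.disjoint_left.mp h : ∀ ⦃a⦄, _) (?_ : x ∈ _) ?_
  · exact ⟨t, 1 - t, ht0.le, by linarith, by ring, rfl⟩
  · apply tri_mem_s11 v a c x D hD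
    · rw [e1]; positivity
    · rw [e2]; positivity
    · rw [e1, e2, ← mul_add]; exact hts

def vdeg (v : Pt) (E : Finset (Sym2 Pt)) : Finset (Sym2 Pt) := E.filter (fun e => v ∈ e)

lemma two_sector (v a b c : Pt) (h1 : dt v a b ≠ 0) (h2 : dt v a c ≠ 0) (h3 : dt v b c ≠ 0)
    (hs : 0 < dt v a b ↔ 0 < dt v a c)
    (hb : Disjoint (segOf s(b, v)) (triInt c v a))
    (hc : Disjoint (segOf s(c, v)) (triInt b v a)) : False := by
  have hcb : dt v c b = - dt v b c := by unfold dt; ring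
  rcases lt_or_gt_of_ne h1 with h | h
  · have h' : dt v a c < 0 := by
      rcases lt_or_gt_of_ne h2 with k | k
      · exact k
      · exact absurd (hs.2 k) (by linarith)
    rcases lt_or_gt_of_ne h3 with k | k
    · exact tri_hit v a b c _ rfl (div_pos_of_neg_of_neg k h') (div_pos_of_neg_of_neg h h') hb
    · exact tri_hit v a c b _ rfl (div_pos_of_neg_of_neg (by linarith) h)
        (div_pos_of_neg_of_neg h' h) hc
  · have h' := hs.1 h
    rcases lt_or_gt_of_ne h3 with k | k
    · exact tri_hit v a c b _ rfl (div_pos (by linarith) h) (div_pos h' h) hc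
    · exact tri_hit v a b c _ rfl (div_pos k h') (div_pos h h') hb

lemma step_deg {S : Finset Pt} (hS : ConvexPos S) (v : Pt) {E F : Finset (Sym2 Pt)}
    (h : SimEdgeSlide S E F) : (vdeg v E).card ≤ 3 * (vdeg v F).card := by
  obtain ⟨hE, hF, π, hπ, hsl⟩ := h
  let K := vdeg v (E ∩ F)
  let N := vdeg v (F \ E)
  let M := (vdeg v (E \ F)).filter (fun e => v ∈ π e)
  let B := (vdeg v (E \ F)).filter (fun e => v ∉ π e)
  have hsub : vdeg v E ⊆ (K ∪ M) ∪ B := by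
    intro e he
    simp only [K, M, B, vdeg, Finset.mem_union, Finset.mem_filter, Finset.mem_inter,
      Finset.mem_sdiff] at he ⊢
    tauto
  have hFc : K.card + N.card = (vdeg v F).card := by
    rw [← Finset.card_union_of_disjoint]
    · congr 1
      ext e
      simp only [K, N, vdeg, Finset.mem_union, Finset.mem_filter, Finset.mem_inter,
        Finset.mem_sdiff]
      tauto
    · rw [Finset.disjoint_left]
      intro e h1 h2
      simp only [K, N, vdeg, Finset.mem_filter, Finset.mem_inter, Finset.mem_sdiff] at h1 h2
      tauto
  have hM : M.card ≤ N.card := by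
    apply Finset.card_le_card_of_injOn π
    · intro e he
      simp only [M, vdeg, Finset.coe_filter, Finset.mem_filter, Set.mem_setOf_eq] at he
      have := hπ.mapsTo (Finset.mem_coe.2 he.1.1)
      simp only [N, vdeg, Finset.coe_filter, Set.mem_setOf_eq]
      exact ⟨Finset.mem_coe.1 this, he.2⟩
    · intro e he e' he' hh
      simp only [M, vdeg, Finset.coe_filter, Finset.mem_filter, Set.mem_setOf_eq] at he he'
      exact hπ.injOn (Finset.mem_coe.2 he.1.1) (Finset.mem_coe.2 he'.1.1) hh
  have hex : ∀ e : Sym2 Pt, ∃ pr : Pt × Pt, e ∈ B → e = s(pr.1, v) ∧ s(v, pr.2) ∈ K ∧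
      v ≠ pr.1 ∧ v ≠ pr.2 ∧ pr.1 ≠ pr.2 ∧ v ∈ S ∧ pr.1 ∈ S ∧ pr.2 ∈ S ∧
      ∀ g ∈ E ∪ F, Disjoint (segOf g) (triInt pr.1 v pr.2) := by
    intro e
    by_cases he : e ∈ B
    · simp only [B, vdeg, Finset.mem_filter] at he
      obtain ⟨⟨he1, hve⟩, hvπ⟩ := he
      obtain ⟨p, q, r, hpq, hpr, hq1, hq2, hdis⟩ := hsl e he1
      have hπF : π e ∈ F := (Finset.mem_sdiff.1 (Finset.mem_coe.1 (hπ.mapsTo (Finset.mem_coe.2 he1)))).1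
      have heE := (Finset.mem_sdiff.1 he1).1
      rw [hpr] at hvπ hπF
      rw [hpq] at hve heE
      simp only [Sym2.mem_iff, not_or] at hvπ hve
      have hvq : v = q := by tauto
      subst hvq
      have a1 := hE.1 _ heE
      have a2 := hF.1 _ hπF
      simp only [Sym2.mk_isDiag_iff] at a1 a2
      refine ⟨(p, r), fun _ => ⟨hpq, ?_, hvπ.1, hvπ.2, a2.1, a1.2 v (by simp), a1.2 p (by simp),
        a2.2 r (by simp), hdis⟩⟩
      simp [K, vdeg, hq1, hq2]
    · exact ⟨(v, v), fun h => absurd h he⟩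
  choose g hg using hex
  have hB : B.card ≤ (K ×ˢ (Finset.univ : Finset Bool)).card := by
    apply Finset.card_le_card_of_injOn
      (fun e => (s(v, (g e).2), decide (0 < dt v (g e).2 (g e).1)))
    · intro e he
      exact Finset.mem_coe.2 (Finset.mem_product.2 ⟨(hg e he).2.1, Finset.mem_univ _⟩)
    · intro e he e' he' hh
      obtain ⟨p1, p2, p3, p4, p5, p6, p7, p8, p9⟩ := hg e he
      obtain ⟨q1, q2, q3, q4, q5, q6, q7, q8, q9⟩ := hg e' he'
      simp only [Prod.mk.injEq, decide_eq_decide] at hh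
      obtain ⟨hr, hs⟩ := hh
      have hr' : (g e).2 = (g e').2 := Sym2.congr_right.1 hr
      by_contra hne
      have hpp : (g e).1 ≠ (g e').1 := by
        intro hp; apply hne; rw [p1, q1, hp]
      have heE : e ∈ E ∪ F := by
        have : e ∈ B := he
        simp only [B, vdeg, Finset.mem_filter, Finset.mem_sdiff] at this
        simp [this.1.1.1]
      have heE' : e' ∈ E ∪ F := by
        have : e' ∈ B := he'
        simp only [B, vdeg, Finset.mem_filter, Finset.mem_sdiff] at this
        simp [this.1.1.1]
      have d1 := q9 e heE
      have d2 := p9 e' heE'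
      rw [p1] at d1
      rw [q1] at d2
      rw [← hr'] at hs d1 q5 
      exact two_sector v (g e).2 (g e).1 (g e').1 (dt_ne hS p6 p8 p7 p4 p3 p5.symm)
        (dt_ne hS p6 p8 q7 p4 q3 q5.symm) (dt_ne hS p6 p7 q7 p3 q3 hpp) hs d1 d2
  have hB2 : B.card ≤ K.card * 2 := by simpa [Finset.card_product] using hB
  have h1 := Finset.card_le_card hsub
  have h2 := Finset.card_union_le (K ∪ M) B
  have h3 := Finset.card_union_le K M
  omega

lemma star_pst {S : Finset Pt} (hS : ConvexPos S) {v : Pt} (hv : v ∈ S) :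
    IsPST S (starAt S v) := by
  refine ⟨?_, ?_, ?_, ?_⟩
  · intro e he
    simp only [starAt, Finset.mem_image, Finset.mem_erase] at he
    obtain ⟨w, ⟨hwv, hw⟩, rfl⟩ := he
    refine ⟨by simpa using hwv.symm, ?_⟩
    intro p hp
    rcases Sym2.mem_iff.1 hp with rfl | rfl <;> assumption
  · intro e he e' he' hne
    simp only [starAt, Finset.mem_image, Finset.mem_erase] at he he'
    obtain ⟨w, ⟨hwv, hw⟩, rfl⟩ := he
    obtain ⟨w', ⟨hwv', hw'⟩, rfl⟩ := he'
    have hww : w ≠ w' := by rintro rfl; exact hne rfl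
    have hd := dt_ne hS hv hw hw' hwv.symm hwv'.symm hww
    rintro x ⟨⟨a, b, ha, hb, hab, rfl⟩, ⟨a', b', ha', hb', hab', hx⟩⟩
    have hb0 : b = 0 := by
      have h1 := congrArg Prod.fst hx
      have h2 := congrArg Prod.snd hx
      simp only [Prod.fst_add, Prod.smul_fst, Prod.snd_add, Prod.smul_snd, smul_eq_mul] at h1 h2
      have : b * dt v w w' = 0 := by
        obtain rfl : a = 1 - b := by linarith
        obtain rfl : a' = 1 - b' := by linarith
        unfold dt
        linear_combination (-(w'.2 - v.2)) * h1 + (w'.1 - v.1) * h2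
      exact (mul_eq_zero.1 this).resolve_right hd
    have ha1 : a = 1 := by linarith
    subst hb0 ha1
    simp [epts]
  · rw [starAt, Finset.card_image_of_injective _ (fun a b h => Sym2.congr_right.1 h)]
    exact Finset.card_erase_add_one hv
  · have h1 : ∀ p ∈ S, Relation.ReflTransGen (fun a b => s(a, b) ∈ starAt S v) v p := by
      intro p hp
      by_cases h : p = v
      · subst h; exact .refl
      · exact .single (Finset.mem_image.2 ⟨p, by simp [h, hp], rfl⟩)
    have h2 : ∀ p ∈ S, Relation.ReflTransGen (fun a b => s(a, b) ∈ starAt S v) p v := by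
      intro p hp
      by_cases h : p = v
      · subst h; exact .refl
      · exact .single (Finset.mem_image.2 ⟨p, by simp [h, hp], Sym2.eq_swap⟩)
    intro p hp q hq
    exact (h2 p hp).trans (h1 q hq)

/-- on every set of `n ≥ 3` points in convex position there are two trees at
simultaneous edge slide distance `Ω(log n)`. -/
theorem stmt_11 :
    ∃ c : ℝ, 0 < c ∧ ∀ n : ℕ, 3 ≤ n → ∀ S : Finset Pt, S.card = n → ConvexPos S →
      ∃ E₁ E₂ : Finset (Sym2 Pt), IsPST S E₁ ∧ IsPST S E₂ ∧
        ∀ (k : ℕ) (f : ℕ → Finset (Sym2 Pt)), f 0 = E₁ → f k = E₂ →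
          (∀ i < k, SimEdgeSlide S (f i) (f (i + 1))) → c * Real.log n ≤ (k : ℝ) := by
  refine ⟨1 / 4, by norm_num, ?_⟩
  intro n hn S hcard hS
  obtain ⟨v, hv, w, hw, hvw⟩ := Finset.one_lt_card.1 (by omega : 1 < S.card)
  refine ⟨starAt S v, starAt S w, star_pst hS hv, star_pst hS hw, ?_⟩
  intro k f h0 hk hstep
  have hind : ∀ j ≤ k, (vdeg v (f 0)).card ≤ 3 ^ j * (vdeg v (f j)).card := by
    intro j
    induction j with
    | zero => intro _; simp
    | succ j ih =>
      intro hj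
      have h1 := ih (by omega)
      have h2 := step_deg hS v (hstep j (by omega))
      calc _ ≤ 3 ^ j * (vdeg v (f j)).card := h1
        _ ≤ 3 ^ j * (3 * (vdeg v (f (j + 1))).card) := Nat.mul_le_mul_left _ h2
        _ = _ := by ring
  have hd0 : (vdeg v (starAt S v)).card + 1 = n := by
    have : vdeg v (starAt S v) = starAt S v := by
      apply Finset.filter_true_of_mem
      intro e he
      simp only [starAt, Finset.mem_image] at he
      obtain ⟨u, _, rfl⟩ := he
      simp
    rw [this, (star_pst hS hv).2.2.1, hcard]
  have hdk : (vdeg v (starAt S w)).card ≤ 1 := by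
    rw [Finset.card_le_one_iff_subset_singleton]
    refine ⟨s(w, v), ?_⟩
    intro e he
    simp only [vdeg, starAt, Finset.mem_filter, Finset.mem_image] at he
    obtain ⟨⟨u, _, rfl⟩, hu⟩ := he
    rcases Sym2.mem_iff.1 hu with h | h
    · exact absurd h hvw
    · simp [h]
  have hmain := hind k le_rfl
  rw [h0, hk] at hmain
  have hn1 : n ≤ 3 ^ k + 1 := by
    have := Nat.mul_le_mul_left (3 ^ k) hdk
    omega
  have hk1 : k ≠ 0 := by rintro rfl; simp at hn1; omega
  have hn2 : n ≤ 3 ^ (2 * k) := by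
    have h3 : 3 ≤ 3 ^ k := Nat.le_self_pow hk1 3
    have : 3 ^ (2 * k) = 3 ^ k * 3 ^ k := by ring
    nlinarith
  have hlog : Real.log n ≤ (2 * k : ℕ) * Real.log 3 := by
    rw [← Real.log_pow]
    apply Real.log_le_log (by positivity)
    exact_mod_cast hn2
  have hl3 : Real.log 3 ≤ 2 := by
    have := Real.log_le_sub_one_of_pos (show (0:ℝ) < 3 by norm_num)
    linarith
  push_cast at hlog
  have : (2 * (k:ℝ)) * Real.log 3 ≤ (2 * k) * 2 := by gcongr
  linarith
end
end
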